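/- arXiv:1507.02700 — 4 statements merged into one kernel-verified Lean document; each statement's English description precedes it below -/
import Mathlib

section
/- There exists a group homomorphism from the n-strand Z/2-braid group Br_2^n to the n-strand virtual braid group Br_v^n that sends each even generator σ_{i,0} to the classical generator σ_i and each odd generator σ_{i,1} to the virtual generator ζ_i, for every i = 1, …, n−1. -/
/-!
A homomorphism out of a presented group is a choice of images of the generators that kills the
relators. Far commutativity in `Br₂ⁿ` maps to one of the three far commutativity relations of
`Br_vⁿ`. In the parity third Reidemeister relation the
condition `ε + η + ξ = 0` leaves four triples:

* `(0, 0, 0)` gives the classical braid relation;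
* `(0, 1, 1)` gives the mixed relation `σ_i ζ_{i+1} ζ_i = ζ_{i+1} ζ_i σ_{i+1}`;
* `(1, 0, 1)` gives `ζ_i σ_{i+1} ζ_i = ζ_{i+1} σ_i ζ_{i+1}`, obtained from the mixed relation by
  multiplying by `ζ_{i+1}` on the left and by `ζ_i` on the right;
* `(1, 1, 0)` gives `ζ_i ζ_{i+1} σ_i = σ_{i+1} ζ_i ζ_{i+1}`, obtained from the mixed relation by
  multiplying on both sides by `ζ_i ζ_{i+1} = (ζ_{i+1} ζ_i)⁻¹`.

The last two use that the virtual generators are involutions. The virtual braid relation, which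
would correspond to the excluded triple `(1, 1, 1)`, plays no role.
-/

/-!
STATEMENT 0: There exists a group homomorphism from the n-strand ℤ/2-braid group
`Br₂ⁿ` to the n-strand virtual braid group `Br_vⁿ` sending each even generator
σ_{i,0} to the classical generator σ_i and each odd generator σ_{i,1} to the
virtual generator ζ_i.
-/

namespace MarkedBraids

/-- Defining relators of the `n`-strand ℤ/2-braid group `Br₂ⁿ`:
far commutativity and the parity third Reidemeister relation. -/
def z2BraidRels (n : ℕ) : Set (FreeGroup (Fin (n - 1) × ZMod 2)) :=
  {w | ∃ (i j : Fin (n - 1)) (ε η : ZMod 2),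
      ((i : ℕ) + 2 ≤ (j : ℕ) ∨ (j : ℕ) + 2 ≤ (i : ℕ)) ∧
      w = FreeGroup.of (i, ε) * FreeGroup.of (j, η) *
          (FreeGroup.of (j, η) * FreeGroup.of (i, ε))⁻¹} ∪
  {w | ∃ (i j : Fin (n - 1)) (ε η ξ : ZMod 2),
      (j : ℕ) = (i : ℕ) + 1 ∧ ε + η + ξ = 0 ∧
      w = FreeGroup.of (i, ε) * FreeGroup.of (j, η) * FreeGroup.of (i, ξ) *
          (FreeGroup.of (j, ξ) * FreeGroup.of (i, η) * FreeGroup.of (j, ε))⁻¹}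

/-- The `n`-strand ℤ/2-braid group `Br₂ⁿ`. -/
abbrev Z2BraidGroup (n : ℕ) := PresentedGroup (z2BraidRels n)

/-- The generator σ_{i,ε} of `Br₂ⁿ`. -/
def σ₂ {n : ℕ} (i : Fin (n - 1)) (ε : ZMod 2) : Z2BraidGroup n :=
  PresentedGroup.of (i, ε)

/-- Classical generator (as a word) of the virtual braid group. -/
def σw {n : ℕ} (i : Fin (n - 1)) : FreeGroup (Fin (n - 1) ⊕ Fin (n - 1)) :=
  FreeGroup.of (Sum.inl i)

/-- Virtual generator (as a word) of the virtual braid group. -/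
def ζw {n : ℕ} (i : Fin (n - 1)) : FreeGroup (Fin (n - 1) ⊕ Fin (n - 1)) :=
  FreeGroup.of (Sum.inr i)

/-- Defining relators of the `n`-strand virtual braid group `Br_vⁿ`. -/
def virtualBraidRels (n : ℕ) : Set (FreeGroup (Fin (n - 1) ⊕ Fin (n - 1))) :=
  -- far commutativity of classical generators
  {w | ∃ i j : Fin (n - 1), ((i : ℕ) + 2 ≤ (j : ℕ) ∨ (j : ℕ) + 2 ≤ (i : ℕ)) ∧
      w = σw i * σw j * (σw j * σw i)⁻¹} ∪
  -- classical braid relation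
  {w | ∃ i j : Fin (n - 1), (j : ℕ) = (i : ℕ) + 1 ∧
      w = σw i * σw j * σw i * (σw j * σw i * σw j)⁻¹} ∪
  -- far commutativity of virtual generators
  {w | ∃ i j : Fin (n - 1), ((i : ℕ) + 2 ≤ (j : ℕ) ∨ (j : ℕ) + 2 ≤ (i : ℕ)) ∧
      w = ζw i * ζw j * (ζw j * ζw i)⁻¹} ∪
  -- virtual braid relation
  {w | ∃ i j : Fin (n - 1), (j : ℕ) = (i : ℕ) + 1 ∧
      w = ζw i * ζw j * ζw i * (ζw j * ζw i * ζw j)⁻¹} ∪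
  -- virtual generators are involutions
  {w | ∃ i : Fin (n - 1), w = ζw i * ζw i} ∪
  -- mixed relation σ_i ζ_{i+1} ζ_i = ζ_{i+1} ζ_i σ_{i+1}
  {w | ∃ i j : Fin (n - 1), (j : ℕ) = (i : ℕ) + 1 ∧
      w = σw i * ζw j * ζw i * (ζw j * ζw i * σw j)⁻¹} ∪
  -- far commutativity of classical and virtual generators
  {w | ∃ i j : Fin (n - 1), ((i : ℕ) + 2 ≤ (j : ℕ) ∨ (j : ℕ) + 2 ≤ (i : ℕ)) ∧
      w = σw i * ζw j * (ζw j * σw i)⁻¹}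

/-- The `n`-strand virtual braid group `Br_vⁿ`. -/
abbrev VirtualBraidGroup (n : ℕ) := PresentedGroup (virtualBraidRels n)

/-- The classical generator σ_i of `Br_vⁿ`. -/
def σᵥ {n : ℕ} (i : Fin (n - 1)) : VirtualBraidGroup n :=
  PresentedGroup.of (Sum.inl i)

/-- The virtual generator ζ_i of `Br_vⁿ`. -/
def ζᵥ {n : ℕ} (i : Fin (n - 1)) : VirtualBraidGroup n :=
  PresentedGroup.of (Sum.inr i)

section VirtualRelations

variable {n : ℕ} {i j : Fin (n - 1)}

/-- A relator of the form `a * b⁻¹` gives an equation in the virtual braid group. -/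
lemma mk_eq_of_mem {a b : FreeGroup (Fin (n - 1) ⊕ Fin (n - 1))}
    (h : a * b⁻¹ ∈ virtualBraidRels n) :
    PresentedGroup.mk (virtualBraidRels n) a = PresentedGroup.mk (virtualBraidRels n) b := by
  have := PresentedGroup.one_of_mem h
  rwa [map_mul, map_inv, mul_inv_eq_one] at this

lemma σᵥ_comm (h : (i : ℕ) + 2 ≤ j ∨ (j : ℕ) + 2 ≤ i) :
    σᵥ i * σᵥ j = σᵥ j * σᵥ i :=
  mk_eq_of_mem (a := σw i * σw j) (b := σw j * σw i) <|
    .inl <| .inl <| .inl <| .inl <| .inl <| .inl ⟨i, j, h, rfl⟩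

lemma σᵥ_braid (h : (j : ℕ) = i + 1) :
    σᵥ i * σᵥ j * σᵥ i = σᵥ j * σᵥ i * σᵥ j :=
  mk_eq_of_mem (a := σw i * σw j * σw i) (b := σw j * σw i * σw j) <|
    .inl <| .inl <| .inl <| .inl <| .inl <| .inr ⟨i, j, h, rfl⟩

lemma ζᵥ_comm (h : (i : ℕ) + 2 ≤ j ∨ (j : ℕ) + 2 ≤ i) :
    ζᵥ i * ζᵥ j = ζᵥ j * ζᵥ i :=
  mk_eq_of_mem (a := ζw i * ζw j) (b := ζw j * ζw i) <|
    .inl <| .inl <| .inl <| .inl <| .inr ⟨i, j, h, rfl⟩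

lemma ζᵥ_mul_self (i : Fin (n - 1)) : ζᵥ i * ζᵥ i = 1 :=
  PresentedGroup.one_of_mem (x := ζw i * ζw i) <| .inl <| .inl <| .inr ⟨i, rfl⟩

lemma σᵥ_ζᵥ_ζᵥ (h : (j : ℕ) = i + 1) :
    σᵥ i * ζᵥ j * ζᵥ i = ζᵥ j * ζᵥ i * σᵥ j :=
  mk_eq_of_mem (a := σw i * ζw j * ζw i) (b := ζw j * ζw i * σw j) <|
    .inl <| .inr ⟨i, j, h, rfl⟩

lemma σᵥ_ζᵥ_comm (h : (i : ℕ) + 2 ≤ j ∨ (j : ℕ) + 2 ≤ i) :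
    σᵥ i * ζᵥ j = ζᵥ j * σᵥ i :=
  mk_eq_of_mem (a := σw i * ζw j) (b := ζw j * σw i) <| .inr ⟨i, j, h, rfl⟩

lemma ζᵥ_σᵥ_ζᵥ (h : (j : ℕ) = i + 1) :
    ζᵥ i * σᵥ j * ζᵥ i = ζᵥ j * σᵥ i * ζᵥ j := by
  have hi := ζᵥ_mul_self i
  have hj := ζᵥ_mul_self j
  calc ζᵥ i * σᵥ j * ζᵥ i = ζᵥ j * ζᵥ j * (ζᵥ i * σᵥ j * ζᵥ i) := by rw [hj, one_mul]
    _ = ζᵥ j * (ζᵥ j * ζᵥ i * σᵥ j) * ζᵥ i := by simp only [mul_assoc]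
    _ = ζᵥ j * (σᵥ i * ζᵥ j * ζᵥ i) * ζᵥ i := by rw [σᵥ_ζᵥ_ζᵥ h]
    _ = ζᵥ j * σᵥ i * ζᵥ j := by simp only [mul_assoc, hi, mul_one]

lemma ζᵥ_ζᵥ_σᵥ (h : (j : ℕ) = i + 1) :
    ζᵥ i * ζᵥ j * σᵥ i = σᵥ j * ζᵥ i * ζᵥ j := by
  have hinv : ζᵥ i * ζᵥ j = (ζᵥ j * ζᵥ i)⁻¹ := by
    rw [mul_inv_rev, inv_eq_of_mul_eq_one_left (ζᵥ_mul_self i),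
      inv_eq_of_mul_eq_one_left (ζᵥ_mul_self j)]
  have hm := σᵥ_ζᵥ_ζᵥ h
  rw [mul_assoc] at hm
  rw [mul_assoc (σᵥ j), hinv, inv_mul_eq_iff_eq_mul, ← mul_assoc, ← hm, mul_inv_cancel_right]

end VirtualRelations

/-- The images of the generators: `σ_{i,0} ↦ σ_i` and `σ_{i,1} ↦ ζ_i`. -/
def genImage {n : ℕ} (p : Fin (n - 1) × ZMod 2) : VirtualBraidGroup n :=
  if p.2 = 0 then σᵥ p.1 else ζᵥ p.1

lemma genImage_zero {n : ℕ} (i : Fin (n - 1)) : genImage (i, 0) = σᵥ i := if_pos rfl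

lemma genImage_one {n : ℕ} (i : Fin (n - 1)) : genImage (i, 1) = ζᵥ i := if_neg one_ne_zero

lemma genImage_comm {n : ℕ} {i j : Fin (n - 1)} (ε η : ZMod 2)
    (h : (i : ℕ) + 2 ≤ j ∨ (j : ℕ) + 2 ≤ i) :
    genImage (i, ε) * genImage (j, η) = genImage (j, η) * genImage (i, ε) := by
  have h01 : ∀ x : ZMod 2, x = 0 ∨ x = 1 := by decide
  obtain rfl | rfl := h01 ε <;> obtain rfl | rfl := h01 η <;>
    simp only [genImage_zero, genImage_one]
  · exact σᵥ_comm h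
  · exact σᵥ_ζᵥ_comm h
  · exact (σᵥ_ζᵥ_comm h.symm).symm
  · exact ζᵥ_comm h

lemma genImage_braid {n : ℕ} {i j : Fin (n - 1)} (ε η ξ : ZMod 2)
    (h : (j : ℕ) = i + 1) (hsum : ε + η + ξ = 0) :
    genImage (i, ε) * genImage (j, η) * genImage (i, ξ) =
      genImage (j, ξ) * genImage (i, η) * genImage (j, ε) := by
  have h4 : ∀ x y z : ZMod 2, x + y + z = 0 →
      (x = 0 ∧ y = 0 ∧ z = 0) ∨ (x = 0 ∧ y = 1 ∧ z = 1) ∨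
      (x = 1 ∧ y = 0 ∧ z = 1) ∨ (x = 1 ∧ y = 1 ∧ z = 0) := by decide
  obtain ⟨rfl, rfl, rfl⟩ | ⟨rfl, rfl, rfl⟩ | ⟨rfl, rfl, rfl⟩ | ⟨rfl, rfl, rfl⟩ := h4 ε η ξ hsum <;>
    simp only [genImage_zero, genImage_one]
  · exact σᵥ_braid h
  · exact σᵥ_ζᵥ_ζᵥ h
  · exact ζᵥ_σᵥ_ζᵥ h
  · exact ζᵥ_ζᵥ_σᵥ h

/-- There is a group homomorphism `Br₂ⁿ → Br_vⁿ` with σ_{i,0} ↦ σ_i and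
σ_{i,1} ↦ ζ_i. -/
theorem exists_hom_z2Braid_to_virtualBraid (n : ℕ) :
    ∃ f : Z2BraidGroup n →* VirtualBraidGroup n,
      ∀ i : Fin (n - 1), f (σ₂ i 0) = σᵥ i ∧ f (σ₂ i 1) = ζᵥ i := by
  have hrels : ∀ r ∈ z2BraidRels n, FreeGroup.lift genImage r = 1 := by
    rintro r (⟨i, j, ε, η, h, rfl⟩ | ⟨i, j, ε, η, ξ, h, hsum, rfl⟩)
    · simp only [map_mul, map_inv, FreeGroup.lift_apply_of]
      exact mul_inv_eq_one.mpr (genImage_comm ε η h)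
    · simp only [map_mul, map_inv, FreeGroup.lift_apply_of]
      exact mul_inv_eq_one.mpr (genImage_braid ε η ξ h hsum)
  exact ⟨PresentedGroup.toGroup hrels, fun i =>
    ⟨(PresentedGroup.toGroup.of hrels).trans (genImage_zero i),
      (PresentedGroup.toGroup.of hrels).trans (genImage_one i)⟩⟩

end MarkedBraids
end

section
/- There exists a group homomorphism f from the n-strand Z/2-braid group Br_2^n to the n-strand dotted braid group Br_d^n determined by f(σ_{i,0}) = σ_i and f(σ_{i,1}) = γ_i σ_i γ_{i+1} for every i = 1, …, n−1. -/
/-!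
Each generator `σ_{i,ε}` is sent to `γ_i^ε σ_i γ_{i+1}^ε`, and the relators of `Br₂ⁿ` must die.
Far generators commute because all the letters of their images do. For the braid-type relators,
`ε + η + ξ = 0` leaves four cases: the ordinary braid relation, and three cases
(`braid_110`, `braid_101`, `braid_011`) in which exactly two crossings are decorated. There the
relations `γ_i γ_{i+1} σ_i = σ_i γ_i γ_{i+1}` and `γ_k σ_i = σ_i γ_k` move all dots to the outside
of the triple crossing in the same way on both sides, and the ordinary braid relation finishes.
-/

/-!
STATEMENT 3: There is a group homomorphism `f : Br₂ⁿ → Br_dⁿ` from the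
n-strand ℤ/2-braid group to the n-strand dotted braid group determined by
f(σ_{i,0}) = σ_i and f(σ_{i,1}) = γ_i σ_i γ_{i+1}.
-/

namespace MarkedBraids

/-- The left strand `i` of the crossing σ_i, as an index in `Fin n`. -/
def strandL {n : ℕ} (i : Fin (n - 1)) : Fin n :=
  ⟨(i : ℕ), by have := i.isLt; omega⟩

/-- The right strand `i+1` of the crossing σ_i, as an index in `Fin n`. -/
def strandR {n : ℕ} (i : Fin (n - 1)) : Fin n :=
  ⟨(i : ℕ) + 1, by have := i.isLt; omega⟩

/-- The crossing generator σ_i, as a word. -/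
def σdw {n : ℕ} (i : Fin (n - 1)) : FreeGroup (Fin (n - 1) ⊕ Fin n) :=
  FreeGroup.of (Sum.inl i)

/-- The dot generator γ_k, as a word. -/
def γw {n : ℕ} (k : Fin n) : FreeGroup (Fin (n - 1) ⊕ Fin n) :=
  FreeGroup.of (Sum.inr k)

/-- Defining relators of the `n`-strand dotted braid group `Br_dⁿ`. -/
def dottedBraidRels (n : ℕ) : Set (FreeGroup (Fin (n - 1) ⊕ Fin n)) :=
  -- far commutativity of crossings
  {w | ∃ i j : Fin (n - 1), ((i : ℕ) + 2 ≤ (j : ℕ) ∨ (j : ℕ) + 2 ≤ (i : ℕ)) ∧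
      w = σdw i * σdw j * (σdw j * σdw i)⁻¹} ∪
  -- braid relation
  {w | ∃ i j : Fin (n - 1), (j : ℕ) = (i : ℕ) + 1 ∧
      w = σdw i * σdw j * σdw i * (σdw j * σdw i * σdw j)⁻¹} ∪
  -- dots are involutions: γ_k² = e
  {w | ∃ k : Fin n, w = γw k * γw k} ∪
  -- dots commute with each other
  {w | ∃ k l : Fin n, w = γw k * γw l * (γw l * γw k)⁻¹} ∪
  -- four dots around a crossing cancel: γ_i γ_{i+1} σ_i γ_i γ_{i+1} = σ_i
  {w | ∃ i : Fin (n - 1),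
      w = γw (strandL i) * γw (strandR i) * σdw i * γw (strandL i) * γw (strandR i) *
          (σdw i)⁻¹} ∪
  -- a dot on a strand not involved in a crossing commutes with that crossing
  {w | ∃ (i : Fin (n - 1)) (k : Fin n), k ≠ strandL i ∧ k ≠ strandR i ∧
      w = γw k * σdw i * (σdw i * γw k)⁻¹}

/-- The `n`-strand dotted braid group `Br_dⁿ`. -/
abbrev DottedBraidGroup (n : ℕ) := PresentedGroup (dottedBraidRels n)

/-- The crossing generator σ_i of `Br_dⁿ`. -/
def σd {n : ℕ} (i : Fin (n - 1)) : DottedBraidGroup n :=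
  PresentedGroup.of (Sum.inl i)

/-- The dot generator γ_k of `Br_dⁿ`. -/
def γd {n : ℕ} (k : Fin n) : DottedBraidGroup n :=
  PresentedGroup.of (Sum.inr k)

section DotCalculus

variable {G : Type*} [Group G] {a b c s t : G}

/-- The braid-type relation with marks `(1, 1, 0)`: both sides equal `a (s t s) c`. -/
theorem braid_110 (hb : b * b = 1) (hcs : c * s = s * c) (hat : a * t = t * a)
    (hst : s * t * s = t * s * t) :
    (a * s * b) * (b * t * c) * s = t * (a * s * b) * (b * t * c) :=
  calc (a * s * b) * (b * t * c) * s = a * s * (b * b) * t * (c * s) := by group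
    _ = a * (s * t * s) * c := by rw [hb, hcs]; group
    _ = (a * t) * s * t * c := by rw [hst]; group
    _ = t * a * s * (b * b) * t * c := by rw [hat, hb]; group
    _ = t * (a * s * b) * (b * t * c) := by group

/-- The braid-type relation with marks `(1, 0, 1)`: both sides equal `b (s t s) b`. -/
theorem braid_101 (ha : a * a = 1) (hc : c * c = 1)
    (hab : a * b = b * a) (hbc : b * c = c * b) (hcs : c * s = s * c) (hat : a * t = t * a)
    (habs : a * b * s = s * (a * b)) (hbct : b * c * t = t * (b * c))
    (hst : s * t * s = t * s * t) :
    (a * s * b) * t * (a * s * b) = (b * t * c) * s * (b * t * c) := by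
  have h₁ : (a * s * b) * t * (a * s * b) = b * (s * t * s) * b :=
    calc (a * s * b) * t * (a * s * b) = a * s * b * (t * a) * s * b := by group
      _ = a * s * (b * a) * t * s * b := by rw [← hat]; group
      _ = a * (s * (a * b)) * t * s * b := by rw [← hab]; group
      _ = (a * a) * b * s * t * s * b := by rw [← habs]; group
      _ = b * (s * t * s) * b := by rw [ha]; group
  have h₂ : (b * t * c) * s * (b * t * c) = b * (t * s * t) * b :=
    calc (b * t * c) * s * (b * t * c) = b * t * (c * s) * b * t * c := by group
      _ = b * t * s * (c * b) * t * c := by rw [hcs]; group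
      _ = b * t * s * (b * c * t) * c := by rw [← hbc]; group
      _ = b * t * s * t * b * (c * c) := by rw [hbct]; group
      _ = b * (t * s * t) * b := by rw [hc]; group
  rw [h₁, h₂, hst]

/-- The braid-type relation with marks `(0, 1, 1)`: both sides equal `a b (s t s) b c`. -/
theorem braid_011 (hab : a * b = b * a) (hbc : b * c = c * b) (hac : a * c = c * a)
    (hcs : c * s = s * c) (hat : a * t = t * a)
    (habs : a * b * s = s * (a * b)) (hbct : b * c * t = t * (b * c))
    (hst : s * t * s = t * s * t) :
    s * (b * t * c) * (a * s * b) = (b * t * c) * (a * s * b) * t := by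
  have h₀ : (b * t * c) * (a * s * b) = (a * b) * t * s * (b * c) :=
    calc (b * t * c) * (a * s * b) = b * t * (c * a) * s * b := by group
      _ = b * (t * a) * (c * s) * b := by rw [← hac]; group
      _ = (b * a) * t * s * (c * b) := by rw [← hat, hcs]; group
      _ = (a * b) * t * s * (b * c) := by rw [hab, hbc]
  calc s * (b * t * c) * (a * s * b) = s * ((b * t * c) * (a * s * b)) := by group
    _ = (s * (a * b)) * t * s * (b * c) := by rw [h₀]; group
    _ = (a * b) * (s * t * s) * (b * c) := by rw [← habs]; group
    _ = (a * b) * t * s * (t * (b * c)) := by rw [hst]; group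
    _ = ((a * b) * t * s * (b * c)) * t := by rw [← hbct]; group
    _ = (b * t * c) * (a * s * b) * t := by rw [h₀]

end DotCalculus

section Relations

variable {n : ℕ}

theorem σd_comm {i j : Fin (n - 1)}
    (h : (i : ℕ) + 2 ≤ (j : ℕ) ∨ (j : ℕ) + 2 ≤ (i : ℕ)) : Commute (σd i) (σd j) :=
  mul_inv_eq_one.mp (PresentedGroup.one_of_mem (rels := dottedBraidRels n)
    (Or.inl <| Or.inl <| Or.inl <| Or.inl <| Or.inl ⟨i, j, h, rfl⟩))

theorem σd_braid {i j : Fin (n - 1)} (h : (j : ℕ) = (i : ℕ) + 1) :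
    σd i * σd j * σd i = σd j * σd i * σd j :=
  mul_inv_eq_one.mp (PresentedGroup.one_of_mem (rels := dottedBraidRels n)
    (Or.inl <| Or.inl <| Or.inl <| Or.inl <| Or.inr ⟨i, j, h, rfl⟩))

theorem γd_mul_self (k : Fin n) : γd k * γd k = 1 :=
  PresentedGroup.one_of_mem (rels := dottedBraidRels n)
    (Or.inl <| Or.inl <| Or.inl <| Or.inr ⟨k, rfl⟩)

theorem γd_comm (k l : Fin n) : Commute (γd k) (γd l) :=
  mul_inv_eq_one.mp (PresentedGroup.one_of_mem (rels := dottedBraidRels n)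
    (Or.inl <| Or.inl <| Or.inr ⟨k, l, rfl⟩))

theorem γd_four (i : Fin (n - 1)) :
    γd (strandL i) * γd (strandR i) * σd i * γd (strandL i) * γd (strandR i) = σd i :=
  mul_inv_eq_one.mp (PresentedGroup.one_of_mem (rels := dottedBraidRels n)
    (Or.inl <| Or.inr ⟨i, rfl⟩))

theorem γd_σd_comm {i : Fin (n - 1)} {k : Fin n} (hL : k ≠ strandL i) (hR : k ≠ strandR i) :
    Commute (γd k) (σd i) :=
  mul_inv_eq_one.mp (PresentedGroup.one_of_mem (rels := dottedBraidRels n)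
    (Or.inr ⟨i, k, hL, hR, rfl⟩))

/-- A pair of dots slides through the crossing of its two strands: the four-dot relation rewritten
using that dots are commuting involutions. -/
theorem γd_pair_slide (i : Fin (n - 1)) :
    γd (strandL i) * γd (strandR i) * σd i = σd i * (γd (strandL i) * γd (strandR i)) := by
  have hLR : (γd (strandL i) * γd (strandR i)) * (γd (strandL i) * γd (strandR i)) = 1 := by
    rw [(γd_comm (strandR i) (strandL i)).mul_mul_mul_comm, γd_mul_self, γd_mul_self, one_mul]
  calc γd (strandL i) * γd (strandR i) * σd i
      = γd (strandL i) * γd (strandR i) * σd i *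
          ((γd (strandL i) * γd (strandR i)) * (γd (strandL i) * γd (strandR i))) := by
        rw [hLR, mul_one]
    _ = (γd (strandL i) * γd (strandR i) * σd i * γd (strandL i) * γd (strandR i)) *
          (γd (strandL i) * γd (strandR i)) := by simp only [mul_assoc]
    _ = σd i * (γd (strandL i) * γd (strandR i)) := by rw [γd_four]

end Relations

/-- The image in `Br_dⁿ` of the generator `σ_{i,ε}`: the plain crossing for `ε = 0`, and the
crossing with a dot on each side for `ε = 1`. -/
def dottedCrossing {n : ℕ} (x : Fin (n - 1) × ZMod 2) : DottedBraidGroup n :=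
  if x.2 = 0 then σd x.1 else γd (strandL x.1) * σd x.1 * γd (strandR x.1)

theorem dottedCrossing_zero {n : ℕ} (i : Fin (n - 1)) : dottedCrossing (i, 0) = σd i :=
  if_pos rfl

theorem dottedCrossing_one {n : ℕ} (i : Fin (n - 1)) :
    dottedCrossing (i, 1) = γd (strandL i) * σd i * γd (strandR i) :=
  if_neg one_ne_zero

theorem dottedCrossing_comm {n : ℕ} {i j : Fin (n - 1)} (ε η : ZMod 2)
    (h : (i : ℕ) + 2 ≤ (j : ℕ) ∨ (j : ℕ) + 2 ≤ (i : ℕ)) :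
    Commute (dottedCrossing (i, ε)) (dottedCrossing (j, η)) := by
  have hLi : Commute (γd (strandL i)) (σd j) := γd_σd_comm
    (by simp only [strandL, ne_eq, Fin.mk.injEq]; omega)
    (by simp only [strandL, strandR, ne_eq, Fin.mk.injEq]; omega)
  have hRi : Commute (γd (strandR i)) (σd j) := γd_σd_comm
    (by simp only [strandL, strandR, ne_eq, Fin.mk.injEq]; omega)
    (by simp only [strandR, ne_eq, Fin.mk.injEq]; omega)
  have hLj : Commute (σd i) (γd (strandL j)) := (γd_σd_comm
    (by simp only [strandL, ne_eq, Fin.mk.injEq]; omega)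
    (by simp only [strandL, strandR, ne_eq, Fin.mk.injEq]; omega)).symm
  have hRj : Commute (σd i) (γd (strandR j)) := (γd_σd_comm
    (by simp only [strandL, strandR, ne_eq, Fin.mk.injEq]; omega)
    (by simp only [strandR, ne_eq, Fin.mk.injEq]; omega)).symm
  have hσ := σd_comm h
  -- A decorated crossing at `j` commutes with any element commuting with its three letters.
  have key : ∀ x : DottedBraidGroup n, Commute x (γd (strandL j)) → Commute x (σd j) →
      Commute x (γd (strandR j)) → Commute x (dottedCrossing (j, η)) := by
    intro x h₁ h₂ h₃
    unfold dottedCrossing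
    split_ifs
    · exact h₂
    · exact (h₁.mul_right h₂).mul_right h₃
  have kσ := key _ hLj hσ hRj
  have kL := key _ (γd_comm (strandL i) _) hLi (γd_comm _ _)
  have kR := key _ (γd_comm (strandR i) _) hRi (γd_comm _ _)
  rw [dottedCrossing]
  split_ifs
  · exact kσ
  · exact (kL.mul_left kσ).mul_left kR

theorem dottedCrossing_braid {n : ℕ} {i j : Fin (n - 1)} (hj : (j : ℕ) = (i : ℕ) + 1)
    {ε η ξ : ZMod 2} (h : ε + η + ξ = 0) :
    dottedCrossing (i, ε) * dottedCrossing (j, η) * dottedCrossing (i, ξ) =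
      dottedCrossing (j, ξ) * dottedCrossing (i, η) * dottedCrossing (j, ε) := by
  -- The two crossings share their middle strand.
  have hmid : strandL j = strandR i := Fin.ext hj
  have hcs : Commute (γd (strandR j)) (σd i) := γd_σd_comm
    (by simp only [strandL, strandR, ne_eq, Fin.mk.injEq]; omega)
    (by simp only [strandR, ne_eq, Fin.mk.injEq]; omega)
  have hat : Commute (γd (strandL i)) (σd j) := γd_σd_comm
    (by simp only [strandL, ne_eq, Fin.mk.injEq]; omega)
    (by simp only [strandL, strandR, ne_eq, Fin.mk.injEq]; omega)
  have hab := γd_comm (strandL i) (strandR i)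
  have hbc := γd_comm (strandR i) (strandR j)
  have hac := γd_comm (strandL i) (strandR j)
  have habs := γd_pair_slide i
  have hbct := γd_pair_slide j
  rw [hmid] at hbct
  have hst := σd_braid hj
  have hcases : (ε = 0 ∧ η = 0 ∧ ξ = 0) ∨ (ε = 1 ∧ η = 1 ∧ ξ = 0) ∨
      (ε = 1 ∧ η = 0 ∧ ξ = 1) ∨ (ε = 0 ∧ η = 1 ∧ ξ = 1) := by
    revert ε η ξ; decide
  rcases hcases with ⟨rfl, rfl, rfl⟩ | ⟨rfl, rfl, rfl⟩ | ⟨rfl, rfl, rfl⟩ | ⟨rfl, rfl, rfl⟩ <;>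
    simp only [dottedCrossing_zero, dottedCrossing_one, hmid]
  · exact hst
  · exact braid_110 (γd_mul_self _) hcs hat hst
  · exact braid_101 (γd_mul_self _) (γd_mul_self _) hab hbc hcs hat habs hbct hst
  · exact braid_011 hab hbc hac hcs hat habs hbct hst

/-- There is a homomorphism `Br₂ⁿ → Br_dⁿ` with σ_{i,0} ↦ σ_i and
σ_{i,1} ↦ γ_i σ_i γ_{i+1}. -/
theorem exists_hom_z2Braid_to_dottedBraid (n : ℕ) :
    ∃ f : Z2BraidGroup n →* DottedBraidGroup n,
      ∀ i : Fin (n - 1),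
        f (σ₂ i 0) = σd i ∧
        f (σ₂ i 1) = γd (strandL i) * σd i * γd (strandR i) := by
  have hrel : ∀ r ∈ z2BraidRels n, FreeGroup.lift (dottedCrossing (n := n)) r = 1 := by
    rintro r (⟨i, j, ε, η, h, rfl⟩ | ⟨i, j, ε, η, ξ, hj, h, rfl⟩)
    · simp only [map_mul, map_inv, FreeGroup.lift_apply_of]
      exact mul_inv_eq_one.mpr (dottedCrossing_comm ε η h)
    · simp only [map_mul, map_inv, FreeGroup.lift_apply_of]
      exact mul_inv_eq_one.mpr (dottedCrossing_braid hj h)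
  refine ⟨PresentedGroup.toGroup hrel, fun i => ⟨?_, ?_⟩⟩
  · exact (PresentedGroup.toGroup.of hrel).trans (dottedCrossing_zero i)
  · exact (PresentedGroup.toGroup.of hrel).trans (dottedCrossing_one i)

end MarkedBraids
end

section
/- The group homomorphism f from the n-strand Z/2-braid group Br_2^n to the n-strand dotted braid group Br_d^n determined by f(σ_{i,0}) = σ_i and f(σ_{i,1}) = γ_i σ_i γ_{i+1} is injective; that is, if two Z/2-braids are equal as dotted braids, then they are equal as Z/2-braids. -/
/-! The relation `γ_i σ_i γ_{i+1} = γ_{i+1} σ_i γ_i` lets a dot pass a crossing at the cost of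
changing the label of that crossing: writing `s_i` for the transposition `(i i+1)`, one has
`γ_k σ_{i,ε} = σ_{i,ε+t} γ_{s_i k}` with `t = 1` if `k ∈ {i, i+1}` and `t = 0` otherwise. So
`Br_dⁿ` is a Zappa–Szép product of `Br₂ⁿ` and `(ℤ/2)ⁿ`, and it acts on
`Br₂ⁿ ≅ Br_dⁿ / (ℤ/2)ⁿ`: `σ_i` acts by left multiplication by `σ_{i,0}`, and `γ_k` by the *sliding
map* `slide k`, which pushes a dot through the whole braid from its left end and drops it at the
other end:
`slide k (σ_{i,ε} w) = σ_{i,ε+t} · slide (s_i k) w`, `slide k 1 = 1`.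

That `slide` is well defined on `Br₂ⁿ` amounts to the fact that a strand passes through exactly zero
or two of the three crossings in a relation `σ_{i,ε} σ_{i+1,η} σ_{i,ξ} = σ_{i+1,ξ} σ_{i,η} σ_{i+1,ε}`,
so that sliding keeps `ε + η + ξ = 0`; it is extracted from a permutation representation of `Br₂ⁿ`
on `Fin n × Br₂ⁿ` (`slideHom`). The sliding maps are commuting involutions and satisfy the
relations of `Br_dⁿ`, which gives a representation `dottedAction` of `Br_dⁿ` by permutations
of `Br₂ⁿ`. Under it `f w` acts as left multiplication by `w`, so `f w` determines
`w = f w · 1`. -/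

/-!
STATEMENT 4: The group homomorphism `f : Br₂ⁿ → Br_dⁿ` determined by
f(σ_{i,0}) = σ_i and f(σ_{i,1}) = γ_i σ_i γ_{i+1} is injective; i.e., if two
ℤ/2-braids are equal as dotted braids, then they are equal as ℤ/2-braids.
-/

namespace MarkedBraids

section Slide

variable {n : ℕ}

/-- The label change of a crossing `σ_i` when a dot at position `k` slides through it: `1` if `k`
is one of the two strands of the crossing, and `0` otherwise. -/
def toggle (i : Fin (n - 1)) (k : Fin n) : ZMod 2 :=
  if k = strandL i ∨ k = strandR i then 1 else 0

/-- The transposition of strand positions underlying the crossing `σ_i`. -/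
def transp (i : Fin (n - 1)) : Equiv.Perm (Fin n) :=
  Equiv.swap (strandL i) (strandR i)

lemma strandL_ne_strandR (i : Fin (n - 1)) : strandL i ≠ strandR i := by
  simp [strandL, strandR, Fin.ext_iff]

@[simp] lemma transp_transp (i : Fin (n - 1)) (k : Fin n) : transp i (transp i k) = k := by
  simp [transp]

@[simp] lemma transp_L (i : Fin (n - 1)) : transp i (strandL i) = strandR i := by
  simp [transp]

@[simp] lemma transp_R (i : Fin (n - 1)) : transp i (strandR i) = strandL i := by
  simp [transp]

lemma transp_of_ne {i : Fin (n - 1)} {k : Fin n} (h : k ≠ strandL i) (h' : k ≠ strandR i) :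
    transp i k = k :=
  Equiv.swap_apply_of_ne_of_ne h h'

@[simp] lemma toggle_L (i : Fin (n - 1)) : toggle i (strandL i) = 1 := by simp [toggle]

@[simp] lemma toggle_R (i : Fin (n - 1)) : toggle i (strandR i) = 1 := by simp [toggle]

lemma toggle_of_ne {i : Fin (n - 1)} {k : Fin n} (h : k ≠ strandL i) (h' : k ≠ strandR i) :
    toggle i k = 0 := by simp [toggle, h, h']

@[simp] lemma toggle_transp (i : Fin (n - 1)) (k : Fin n) :
    toggle i (transp i k) = toggle i k := by
  by_cases h : k = strandL i
  · subst h; simp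
  by_cases h' : k = strandR i
  · subst h'; simp
  rw [transp_of_ne h h']

lemma σ₂_far {i j : Fin (n - 1)} (h : (i : ℕ) + 2 ≤ j ∨ (j : ℕ) + 2 ≤ i) (ε η : ZMod 2) :
    (σ₂ i ε * σ₂ j η : Z2BraidGroup n) = σ₂ j η * σ₂ i ε := by
  have := PresentedGroup.one_of_mem (rels := z2BraidRels n)
    (x := FreeGroup.of (i, ε) * FreeGroup.of (j, η) *
          (FreeGroup.of (j, η) * FreeGroup.of (i, ε))⁻¹) (Or.inl ⟨i, j, ε, η, h, rfl⟩)
  rw [map_mul, map_inv, mul_inv_eq_one] at this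
  exact this

lemma σ₂_braid {i j : Fin (n - 1)} (h : (j : ℕ) = i + 1) {ε η ξ : ZMod 2} (hs : ε + η + ξ = 0) :
    (σ₂ i ε * σ₂ j η * σ₂ i ξ : Z2BraidGroup n) = σ₂ j ξ * σ₂ i η * σ₂ j ε := by
  have := PresentedGroup.one_of_mem (rels := z2BraidRels n)
    (x := FreeGroup.of (i, ε) * FreeGroup.of (j, η) * FreeGroup.of (i, ξ) *
          (FreeGroup.of (j, ξ) * FreeGroup.of (i, η) * FreeGroup.of (j, ε))⁻¹)
    (Or.inr ⟨i, j, ε, η, ξ, h, hs, rfl⟩)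
  rw [map_mul, map_inv, mul_inv_eq_one] at this
  exact this

/-- Left multiplication by `σ_{i,ε}` on a braid that carries a marked strand: the mark moves along
its strand, and the label of the crossing changes if the marked strand takes part in it. -/
def slideStep (i : Fin (n - 1)) (ε : ZMod 2) : Equiv.Perm (Fin n × Z2BraidGroup n) where
  toFun p := (transp i p.1, σ₂ i (ε + toggle i p.1) * p.2)
  invFun p := (transp i p.1, (σ₂ i (ε + toggle i p.1))⁻¹ * p.2)
  left_inv p := by simp
  right_inv p := by simp

lemma slideStep_apply (i : Fin (n - 1)) (ε : ZMod 2) (k : Fin n) (w : Z2BraidGroup n) :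
    slideStep i ε (k, w) = (transp i k, σ₂ i (ε + toggle i k) * w) := rfl

lemma slideStep_far {i j : Fin (n - 1)} (h : (i : ℕ) + 2 ≤ j ∨ (j : ℕ) + 2 ≤ i) (ε η : ZMod 2) :
    slideStep (n := n) i ε * slideStep j η = slideStep j η * slideStep i ε := by
  have h1 : ∀ k : Fin n, toggle i (transp j k) = toggle i k := by
    intro k
    simp only [toggle, transp, Equiv.swap_apply_def, strandL, strandR, Fin.ext_iff]
    split_ifs <;> grind
  have h2 : ∀ k : Fin n, toggle j (transp i k) = toggle j k := by
    intro k
    simp only [toggle, transp, Equiv.swap_apply_def, strandL, strandR, Fin.ext_iff]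
    split_ifs <;> grind
  have h3 : ∀ k : Fin n, transp i (transp j k) = transp j (transp i k) := by
    intro k
    simp only [transp, Equiv.swap_apply_def, strandL, strandR, Fin.ext_iff]
    split_ifs <;> grind
  refine Equiv.ext fun ⟨k, w⟩ => ?_
  simp only [Equiv.Perm.mul_apply, slideStep_apply, h1, h2, h3, ← mul_assoc, σ₂_far h]

/-- The sliding steps satisfy the braid relation, because a strand takes part in exactly zero or two
of the three crossings. -/
lemma slideStep_braid {i j : Fin (n - 1)} (h : (j : ℕ) = i + 1) {ε η ξ : ZMod 2}
    (hs : ε + η + ξ = 0) :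
    slideStep (n := n) i ε * slideStep j η * slideStep i ξ =
      slideStep j ξ * slideStep i η * slideStep j ε := by
  have hij : strandR i = strandL j := by simp [strandL, strandR, h]
  have hLR : strandL i ≠ strandR j := by simp [strandL, strandR, Fin.ext_iff]; omega
  have hi : strandL i ≠ strandL j := hij ▸ strandL_ne_strandR i
  have hj := strandL_ne_strandR j
  have eiL := transp_L i
  have eiR := transp_R i
  have tiR := toggle_R i
  rw [hij] at eiL eiR tiR
  have eiR' : transp i (strandR j) = strandR j := transp_of_ne hLR.symm (hij ▸ hj.symm)
  have tiR' : toggle i (strandR j) = 0 := toggle_of_ne hLR.symm (hij ▸ hj.symm)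
  have ejL : transp j (strandL i) = strandL i := transp_of_ne hi hLR
  have tjL : toggle j (strandL i) = 0 := toggle_of_ne hi hLR
  have two : (1 : ZMod 2) + 1 = 0 := rfl
  refine Equiv.ext fun ⟨k, w⟩ => ?_
  by_cases k1 : k = strandL i
  · subst k1
    simp only [Equiv.Perm.mul_apply, slideStep_apply, eiL, eiR, tiR, eiR', tiR', ejL, tjL,
      transp_L, transp_R, toggle_L, toggle_R, ← mul_assoc]
    rw [σ₂_braid h (by linear_combination hs + two)]
  by_cases k2 : k = strandL j
  · subst k2
    simp only [Equiv.Perm.mul_apply, slideStep_apply, eiL, eiR, tiR, eiR', tiR', ejL, tjL,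
      transp_L, transp_R, toggle_L, toggle_R, ← mul_assoc]
    rw [σ₂_braid h (by linear_combination hs + two)]
  by_cases k3 : k = strandR j
  · subst k3
    simp only [Equiv.Perm.mul_apply, slideStep_apply, eiL, eiR, tiR, eiR', tiR', ejL, tjL,
      transp_L, transp_R, toggle_L, toggle_R, ← mul_assoc]
    rw [σ₂_braid h (by linear_combination hs + two)]
  · simp only [Equiv.Perm.mul_apply, slideStep_apply, transp_of_ne k1 (hij ▸ k2),
      transp_of_ne k2 k3, toggle_of_ne k1 (hij ▸ k2), toggle_of_ne k2 k3, ← mul_assoc]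
    rw [σ₂_braid h (by linear_combination hs)]

/-- The representation of `Br₂ⁿ` on braids with a marked strand given by `slideStep`. -/
def slideHom : Z2BraidGroup n →* Equiv.Perm (Fin n × Z2BraidGroup n) :=
  PresentedGroup.toGroup (f := fun p => slideStep p.1 p.2) (by
    rintro r (⟨i, j, ε, η, h, rfl⟩ | ⟨i, j, ε, η, ξ, h, hs, rfl⟩)
    · simp only [map_mul, map_inv, FreeGroup.lift_apply_of, mul_inv_eq_one]
      exact slideStep_far h ε η
    · simp only [map_mul, map_inv, FreeGroup.lift_apply_of, mul_inv_eq_one]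
      exact slideStep_braid h hs)

@[simp] lemma slideHom_σ₂ (i : Fin (n - 1)) (ε : ZMod 2) :
    slideHom (σ₂ i ε : Z2BraidGroup n) = slideStep i ε :=
  PresentedGroup.toGroup.of _

/-- Induction on braids, one left factor at a time. -/
lemma z2_induction {P : Z2BraidGroup n → Prop} (one : P 1)
    (step : ∀ i ε w, P (σ₂ i ε * w) ↔ P w) (w : Z2BraidGroup n) : P w := by
  have hw : w ∈ Subgroup.closure (Set.range (PresentedGroup.of (rels := z2BraidRels n))) := by
    rw [PresentedGroup.closure_range_of]; trivial
  induction hw using Subgroup.closure_induction_left with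
  | one => exact one
  | mul_left x hx y _ ih =>
    obtain ⟨⟨i, ε⟩, rfl⟩ := hx
    exact (step i ε y).2 ih
  | inv_mul_cancel x hx y _ ih =>
    obtain ⟨⟨i, ε⟩, rfl⟩ := hx
    refine (step i ε _).1 ?_
    rw [σ₂, mul_inv_cancel_left]
    exact ih

/-- Right multiplication by `y` on braids with a marked strand. -/
def mulRightPerm (y : Z2BraidGroup n) : Equiv.Perm (Fin n × Z2BraidGroup n) :=
  (Equiv.refl _).prodCongr (Equiv.mulRight y)

lemma mulRightPerm_apply (y : Z2BraidGroup n) (p : Fin n × Z2BraidGroup n) :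
    mulRightPerm y p = (p.1, p.2 * y) := rfl

lemma slideHom_commute (w y : Z2BraidGroup n) : Commute (slideHom w) (mulRightPerm y) := by
  induction w using z2_induction with
  | one => rw [map_one]; exact Commute.one_left _
  | step i ε w =>
    have hc : Commute (slideHom (σ₂ i ε : Z2BraidGroup n)) (mulRightPerm y) := by
      rw [slideHom_σ₂]
      refine Equiv.ext fun ⟨k, x⟩ => ?_
      simp only [Equiv.Perm.mul_apply, slideStep_apply, mulRightPerm_apply, mul_assoc]
    rw [map_mul]
    refine ⟨fun h => ?_, fun h => hc.mul_left h⟩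
    simpa using hc.inv_left.mul_left h

lemma slideHom_apply_snd (w : Z2BraidGroup n) (k : Fin n) (y : Z2BraidGroup n) :
    (slideHom w (k, y)).2 = (slideHom w (k, 1)).2 * y := by
  have := congrArg Prod.snd (Equiv.congr_fun (slideHom_commute w y) (k, 1))
  simpa [mulRightPerm_apply] using this

/-- The braid obtained from `w` by pushing a dot at its left end, in position `k`, through all of
`w`. The inverses are there because `slideHom` moves a mark through a braid from right to left. -/
def slide (k : Fin n) (w : Z2BraidGroup n) : Z2BraidGroup n :=
  (slideHom w⁻¹ (k, 1)).2⁻¹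

@[simp] lemma slide_one (k : Fin n) : slide k 1 = 1 := by simp [slide]

lemma slide_σ₂_mul (k : Fin n) (i : Fin (n - 1)) (ε : ZMod 2) (w : Z2BraidGroup n) :
    slide k (σ₂ i ε * w) = σ₂ i (ε + toggle i k) * slide (transp i k) w := by
  have h : (slideStep i ε)⁻¹ (k, 1) = (transp i k, (σ₂ i (ε + toggle i k) : Z2BraidGroup n)⁻¹) := by
    rw [Equiv.Perm.inv_eq_iff_eq, slideStep_apply]
    simp
  rw [slide, slide, mul_inv_rev, map_mul, map_inv slideHom (σ₂ i ε), slideHom_σ₂,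
    Equiv.Perm.mul_apply, h, slideHom_apply_snd, mul_inv_rev, inv_inv]

lemma slide_slide (k : Fin n) (w : Z2BraidGroup n) : slide k (slide k w) = w := by
  revert k
  induction w using z2_induction with
  | one => simp
  | step i ε w =>
    have two : (2 : ZMod 2) = 0 := rfl
    have key : ∀ k, slide k (slide k (σ₂ i ε * w)) =
        σ₂ i ε * slide (transp i k) (slide (transp i k) w) := by
      intro k
      rw [slide_σ₂_mul, slide_σ₂_mul]
      congr 2
      linear_combination toggle i k * two
    simp only [key, mul_right_inj]
    exact ⟨fun h k => by simpa using h (transp i k), fun h k => h _⟩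

lemma slide_comm (k l : Fin n) (w : Z2BraidGroup n) :
    slide k (slide l w) = slide l (slide k w) := by
  revert k l
  induction w using z2_induction with
  | one => simp
  | step i ε w =>
    simp only [slide_σ₂_mul, add_right_comm ε, mul_right_inj]
    exact ⟨fun h k l => by simpa using h (transp i k) (transp i l), fun h k l => h _ _⟩

/-- The sliding map as a permutation of `Br₂ⁿ`. -/
def slidePerm (k : Fin n) : Equiv.Perm (Z2BraidGroup n) :=
  Function.Involutive.toPerm (slide k) (slide_slide k)

lemma slidePerm_apply (k : Fin n) (w : Z2BraidGroup n) : slidePerm k w = slide k w := rfl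

/-- The permutations of `Br₂ⁿ` by which the generators of `Br_dⁿ` act. -/
def dottedGen : Fin (n - 1) ⊕ Fin n → Equiv.Perm (Z2BraidGroup n)
  | Sum.inl i => Equiv.mulLeft (σ₂ i 0)
  | Sum.inr k => slidePerm k

lemma dottedGen_rels (r : FreeGroup (Fin (n - 1) ⊕ Fin n)) (hr : r ∈ dottedBraidRels n) :
    FreeGroup.lift dottedGen r = 1 := by
  have two : (1 : ZMod 2) + 1 = 0 := rfl
  rcases hr with (((((⟨i, j, h, rfl⟩ | ⟨i, j, h, rfl⟩) | ⟨k, rfl⟩) | ⟨k, l, rfl⟩) | ⟨i, rfl⟩) |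
    ⟨i, k, h, h', rfl⟩)
  all_goals
    simp only [map_mul, map_inv, σdw, γw, FreeGroup.lift_apply_of, mul_inv_eq_one, dottedGen]
    refine Equiv.ext fun w => ?_
    simp only [Equiv.Perm.mul_apply, Equiv.Perm.one_apply, Equiv.coe_mulLeft, slidePerm_apply]
  · simp only [← mul_assoc, σ₂_far h]
  · simp only [← mul_assoc, σ₂_braid h (show (0 : ZMod 2) + 0 + 0 = 0 from rfl)]
  · exact slide_slide k w
  · exact slide_comm k l w
  · simp only [slide_σ₂_mul, transp_L, transp_R, toggle_L, toggle_R, zero_add, two]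
    rw [slide_slide, slide_slide]
  · rw [slide_σ₂_mul, toggle_of_ne h h', transp_of_ne h h', add_zero]

/-- The action of `Br_dⁿ` on `Br₂ⁿ` in which `σ_i` acts by left multiplication by `σ_{i,0}` and
`γ_k` by sliding a dot in from position `k`. -/
def dottedAction : DottedBraidGroup n →* Equiv.Perm (Z2BraidGroup n) :=
  PresentedGroup.toGroup dottedGen_rels

@[simp] lemma dottedAction_σd (i : Fin (n - 1)) :
    dottedAction (σd i : DottedBraidGroup n) = Equiv.mulLeft (σ₂ i 0) :=
  PresentedGroup.toGroup.of _

@[simp] lemma dottedAction_γd (k : Fin n) :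
    dottedAction (γd k : DottedBraidGroup n) = slidePerm k :=
  PresentedGroup.toGroup.of _

end Slide

/-- The homomorphism `Br₂ⁿ → Br_dⁿ` determined by σ_{i,0} ↦ σ_i and
σ_{i,1} ↦ γ_i σ_i γ_{i+1} is injective. -/
theorem injective_z2Braid_to_dottedBraid (n : ℕ)
    (f : Z2BraidGroup n →* DottedBraidGroup n)
    (hf : ∀ i : Fin (n - 1),
      f (σ₂ i 0) = σd i ∧
      f (σ₂ i 1) = γd (strandL i) * σd i * γd (strandR i)) :
    Function.Injective f := by
  -- Through `f`, a ℤ/2-braid acts by left multiplication; it suffices to see this on generators.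
  have key : dottedAction.comp f = MulAction.toPermHom (Z2BraidGroup n) (Z2BraidGroup n) := by
    refine PresentedGroup.ext fun ⟨i, ε⟩ => Equiv.ext fun w => ?_
    change dottedAction (f (σ₂ i ε)) w = σ₂ i ε * w
    obtain rfl | rfl : ε = 0 ∨ ε = 1 := by revert ε; decide
    · rw [(hf i).1, dottedAction_σd, Equiv.coe_mulLeft]
    · simp only [(hf i).2, map_mul, dottedAction_σd, dottedAction_γd, Equiv.Perm.mul_apply,
        Equiv.coe_mulLeft, slidePerm_apply, slide_σ₂_mul, toggle_L, transp_L, zero_add, slide_slide]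
  intro a b hab
  have h : ∀ c, dottedAction (f c) 1 = c := fun c => by
    have := Equiv.congr_fun (DFunLike.congr_fun key c) 1
    simpa using this
  rw [← h a, ← h b, hab]

end MarkedBraids
end

section
/- In the n-strand dotted braid group Br_d^n, for every 1 ≤ i ≤ n−2 the identity (γ_i σ_i γ_{i+1}) σ_{i+1} (γ_i σ_i γ_{i+1}) = (γ_{i+1} σ_{i+1} γ_{i+2}) σ_i (γ_{i+1} σ_{i+1} γ_{i+2}) holds (the image under the dotted-braid embedding of the third Reidemeister relation σ_{i,1} σ_{i+1,0} σ_{i,1} = σ_{i+1,1} σ_{i,0} σ_{i+1,1}). -/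
/-!
Write `a, b, c` for the three dots and `s, t` for the two crossings. Since dots are commuting
involutions, the four-dot relation says that `s` commutes with `a * b` and `t` with `b * c`; also
`a` commutes with `t` and `c` with `s`. Hence
`a s b t a s b = a s (a b) t s b = a (a b) s t s b = b (s t s) b` and
`b t c s b t c = b t s (b c) t c = b t s t (b c) c = b (t s t) b`,
so the claim reduces to the braid relation.
-/

/-!
STATEMENT 8: In Br_dⁿ, for consecutive i, j = i+1 one has
(γ_i σ_i γ_{i+1}) σ_{i+1} (γ_i σ_i γ_{i+1}) = (γ_{i+1} σ_{i+1} γ_{i+2}) σ_i (γ_{i+1} σ_{i+1} γ_{i+2}),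
the image under the dotted-braid embedding of the third Reidemeister relation
σ_{i,1} σ_{i+1,0} σ_{i,1} = σ_{i+1,1} σ_{i,0} σ_{i+1,1}.
-/

namespace MarkedBraids

/-- The group identity behind the theorem: both sides are brought to the form `b * _ * b` with
`s * t * s`, respectively `t * s * t`, in the middle. -/
theorem dotted_braid_identity {G : Type*} [Group G] {a b c s t : G}
    (ha : a * a = 1) (hb : b * b = 1) (hc : c * c = 1)
    (hs : a * b * s * a * b = s) (ht : b * c * t * b * c = t)
    (hat : a * t = t * a) (hcs : c * s = s * c) (hst : s * t * s = t * s * t) :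
    (a * s * b) * t * (a * s * b) = (b * t * c) * s * (b * t * c) := by
  have hs' : s * (b * a) = a * b * s := by
    calc s * (b * a) = a * b * s * a * (b * b) * a := by nth_rw 1 [← hs]; simp only [mul_assoc]
      _ = a * b * s := by rw [hb, mul_one, mul_assoc _ a a, ha, mul_one]
  have ht' : c * b * t = t * (b * c) := by
    calc c * b * t = c * (b * b) * c * t * b * c := by nth_rw 1 [← ht]; simp only [mul_assoc]
      _ = t * (b * c) := by rw [hb, mul_one, hc, one_mul, mul_assoc]
  calc (a * s * b) * t * (a * s * b) = a * s * b * (t * a) * s * b := by simp only [mul_assoc]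
    _ = a * (s * (b * a)) * t * s * b := by rw [← hat]; simp only [mul_assoc]
    _ = (a * a) * b * (s * t * s) * b := by rw [hs']; simp only [mul_assoc]
    _ = b * (t * s * t) * b * (c * c) := by rw [ha, hc, hst, one_mul, mul_one]
    _ = b * t * s * (t * (b * c)) * c := by simp only [mul_assoc]
    _ = b * t * (s * c) * b * t * c := by rw [← ht']; simp only [mul_assoc]
    _ = (b * t * c) * s * (b * t * c) := by rw [← hcs]; simp only [mul_assoc]

theorem dotted_reidemeister_odd_even_odd (n : ℕ) (i j : Fin (n - 1))
    (hij : (j : ℕ) = (i : ℕ) + 1) :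
    (γd (strandL i) * σd i * γd (strandR i)) * σd j *
      (γd (strandL i) * σd i * γd (strandR i)) =
    ((γd (strandL j) * σd j * γd (strandR j)) * σd i *
      (γd (strandL j) * σd j * γd (strandR j)) : DottedBraidGroup n) := by
  have mk : ∀ {w}, w ∈ dottedBraidRels n → PresentedGroup.mk (dottedBraidRels n) w = 1 :=
    fun hw => PresentedGroup.one_of_mem hw
  have sq (k : Fin n) : (γd k * γd k : DottedBraidGroup n) = 1 :=
    mk (Or.inl (Or.inl (Or.inl (Or.inr ⟨k, rfl⟩))))
  have four (l : Fin (n - 1)) :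
      (γd (strandL l) * γd (strandR l) * σd l * γd (strandL l) * γd (strandR l) :
        DottedBraidGroup n) = σd l :=
    mul_inv_eq_one.mp (mk (Or.inl (Or.inr ⟨l, rfl⟩)))
  have far (l : Fin (n - 1)) (k : Fin n) (h₁ : k ≠ strandL l) (h₂ : k ≠ strandR l) :
      (γd k * σd l : DottedBraidGroup n) = σd l * γd k :=
    mul_inv_eq_one.mp (mk (Or.inr ⟨l, k, h₁, h₂, rfl⟩))
  have braid : (σd i * σd j * σd i : DottedBraidGroup n) = σd j * σd i * σd j :=
    mul_inv_eq_one.mp (mk (Or.inl (Or.inl (Or.inl (Or.inl (Or.inr ⟨i, j, hij, rfl⟩))))))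
  have hmid : strandL j = strandR i := Fin.ext hij
  have ht := four j
  rw [hmid] at ht ⊢
  refine dotted_braid_identity (sq _) (sq _) (sq _) (four i) ht (far j _ ?_ ?_)
    (far i _ ?_ ?_) braid <;>
  · simp only [ne_eq, Fin.ext_iff, strandL, strandR]
    omega

end MarkedBraids
end
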